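/- Let S : ℝ → Sym(n) be a smooth curve of real symmetric n×n matrices with Ṡ(t) invertible for every t (a regular curve), and let R_S(t) = d/dt((2Ṡ(t))⁻¹S̈(t)) − ((2Ṡ(t))⁻¹S̈(t))² be its curvature. Fix t ∈ ℝ. Then there is ε > 0 such that S(τ) − S(t) is invertible for all τ with 0 < |τ − t| < ε, and the matrix-valued function τ ↦ (S(τ) − S(t))⁻¹ Ṡ(τ) (S(τ) − S(t))⁻¹ Ṡ(t) − (τ − t)⁻² I − (1/3) R_S(t) is O(τ − t) as τ → t. -/

import Mathlib

/-!
Write `h = τ - t`, `A = Ṡ(t)`, `X = ½ A⁻¹ S̈(t)`, `Y = ⅙ A⁻¹ S⃛(t)`. Taylor's formula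
(`EntrySmooth.taylor`) gives

* `S(τ) - S(t) = h A P` with `P = 1 + hX + h²Y + O(h³)`,
* `Ṡ(τ) = A Q` with `Q = 1 + 2hX + 3h²Y + O(h³)`.

Hence `S(τ) - S(t)` is invertible for small `h ≠ 0`, since `P → 1`, and the cross-ratio equals
`h⁻² P⁻¹ Q P⁻¹`. Expanding products, which is valid without commutativity, yields
`Q = P (1 + h²(Y - X²)) P + O(h³)` (`isBigO_sub_sandwich`), so that
`P⁻¹ Q P⁻¹ = 1 + h²(Y - X²) + O(h³)`. Finally `Y - X² = ⅓ R_S(t)`, by the formula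
`R_S = ½ Ṡ⁻¹ S⃛ - ¾ (Ṡ⁻¹ S̈)²` (`curvatureMat_eq`). Estimates are made in the `ℓ^∞` operator
norm, which bounds each entry and makes matrices a normed algebra.
-/

open Matrix

/-- Entrywise derivative of a matrix-valued curve. -/
noncomputable def matDeriv {n : ℕ} (S : ℝ → Matrix (Fin n) (Fin n) ℝ) :
    ℝ → Matrix (Fin n) (Fin n) ℝ :=
  fun t => Matrix.of fun i j => deriv (fun τ => S τ i j) t

/-- The curvature (matrix Schwarzian derivative) of a regular curve of symmetric matrices:
`R_S(t) = d/dt((2Ṡ)⁻¹S̈) − ((2Ṡ)⁻¹S̈)²`. -/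
noncomputable def curvatureMat {n : ℕ} (S : ℝ → Matrix (Fin n) (Fin n) ℝ) :
    ℝ → Matrix (Fin n) (Fin n) ℝ :=
  fun t =>
    matDeriv (fun τ => ((2 : ℝ) • matDeriv S τ)⁻¹ * matDeriv (matDeriv S) τ) t
      - (((2 : ℝ) • matDeriv S t)⁻¹ * matDeriv (matDeriv S) t) ^ 2

section Auxiliary

open scoped Matrix.Norms.Operator Topology
open Filter Asymptotics

/-! ### Integrating order estimates -/

/-- Integration of an order estimate: if `g` vanishes at `t` and `g' = O((x - t)^k)`, then
`g = O((x - t)^(k+1))`, by the mean value inequality on the ball of radius `|x - t|`. -/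
lemma isBigO_pow_succ_of_deriv {E : Type*} [NormedAddCommGroup E] [NormedSpace ℝ E]
    {g g' : ℝ → E} {t : ℝ} (k : ℕ) (hd : ∀ x, HasDerivAt g (g' x) x) (h0 : g t = 0)
    (hO : g' =O[𝓝 t] fun x => (x - t) ^ k) :
    g =O[𝓝 t] fun x => (x - t) ^ (k + 1) := by
  obtain ⟨C, hC0, hC⟩ := hO.exists_nonneg
  rw [isBigOWith_iff, Metric.eventually_nhds_iff] at hC
  obtain ⟨δ, hδ, hb⟩ := hC
  refine IsBigO.of_bound C ?_
  rw [Metric.eventually_nhds_iff]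
  refine ⟨δ, hδ, fun x hx => ?_⟩
  have key := (convex_closedBall t |x - t|).norm_image_sub_le_of_norm_hasDerivWithin_le
    (f := g) (f' := g') (C := C * |x - t| ^ k) (x := t) (y := x)
    (fun y _ => (hd y).hasDerivWithinAt) (fun y hy => ?_)
    (by simp) (by simp [Real.dist_eq])
  · rw [h0, sub_zero, Real.norm_eq_abs] at key
    rw [norm_pow, Real.norm_eq_abs, pow_succ, ← mul_assoc]
    exact key
  · rw [Metric.mem_closedBall, Real.dist_eq] at hy
    rw [Real.dist_eq] at hx
    refine (hb (y := y) (by rw [Real.dist_eq]; exact hy.trans_lt hx)).trans ?_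
    rw [norm_pow, Real.norm_eq_abs]
    gcongr

/-! ### Calculus of matrix curves -/

section Curves

variable {n : ℕ}

/-- Differentiability can be checked on entries: matrices carry the product topology, and
difference quotients converge iff their entries do. -/
lemma hasDerivAt_matrix_of_entries {S : ℝ → Matrix (Fin n) (Fin n) ℝ}
    {D : Matrix (Fin n) (Fin n) ℝ} {t : ℝ}
    (h : ∀ i j, HasDerivAt (fun τ => S τ i j) (D i j) t) : HasDerivAt S D t := by
  refine hasDerivAt_iff_tendsto_slope.2 ?_
  refine tendsto_pi_nhds.2 fun i => tendsto_pi_nhds.2 fun j => ?_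
  exact hasDerivAt_iff_tendsto_slope.1 (h i j)

lemma HasDerivAt.matDeriv_eq {S : ℝ → Matrix (Fin n) (Fin n) ℝ}
    {D : Matrix (Fin n) (Fin n) ℝ} {t : ℝ} (h : HasDerivAt S D t) : matDeriv S t = D := by
  ext i j
  have h' := hasDerivAt_iff_tendsto_slope.1 h
  have hij := tendsto_pi_nhds.1 (tendsto_pi_nhds.1 h' i) j
  exact (hasDerivAt_iff_tendsto_slope.2 hij : HasDerivAt (fun τ => S τ i j) (D i j) t).deriv

/-- Smoothness of every entry, the form in which smooth matrix curves are given. -/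
def EntrySmooth (S : ℝ → Matrix (Fin n) (Fin n) ℝ) : Prop :=
  ∀ i j, ContDiff ℝ (⊤ : ℕ∞) fun t => S t i j

lemma EntrySmooth.matDeriv {S : ℝ → Matrix (Fin n) (Fin n) ℝ} (h : EntrySmooth S) :
    EntrySmooth (matDeriv S) := fun i j => (contDiff_infty_iff_deriv.1 (h i j)).2

lemma EntrySmooth.hasDerivAt {S : ℝ → Matrix (Fin n) (Fin n) ℝ} (h : EntrySmooth S) (t : ℝ) :
    HasDerivAt S (_root_.matDeriv S t) t :=
  hasDerivAt_matrix_of_entries fun i j =>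
    ((contDiff_infty_iff_deriv.1 (h i j)).1 t).hasDerivAt

lemma abs_entry_le_norm (A : Matrix (Fin n) (Fin n) ℝ) (i j : Fin n) : |A i j| ≤ ‖A‖ := by
  rw [Matrix.linfty_opNorm_def, ← Real.norm_eq_abs, ← coe_nnnorm, NNReal.coe_le_coe]
  exact (Finset.single_le_sum (f := fun j => ‖A i j‖₊) (fun _ _ => zero_le)
    (Finset.mem_univ j)).trans
    (Finset.le_sup (f := fun i => ∑ j, ‖A i j‖₊) (Finset.mem_univ i))

/-- The curvature without derivatives of inverses:
`R = ½ Ṡ⁻¹ S⃛ - ¾ (Ṡ⁻¹ S̈)²`. -/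
lemma curvatureMat_eq {S : ℝ → Matrix (Fin n) (Fin n) ℝ} (h : EntrySmooth S)
    (hreg : ∀ t, IsUnit (matDeriv S t)) (t : ℝ) :
    curvatureMat S t = (1 / 2 : ℝ) • ((matDeriv S t)⁻¹ * matDeriv (matDeriv (matDeriv S)) t)
      - (3 / 4 : ℝ) • ((matDeriv S t)⁻¹ * matDeriv (matDeriv S) t) ^ 2 := by
  have h2 : ∀ A : Matrix (Fin n) (Fin n) ℝ, IsUnit A →
      ((2 : ℝ) • A)⁻¹ = (1 / 2 : ℝ) • A⁻¹ := by
    intro A hA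
    refine Matrix.inv_eq_left_inv ?_
    rw [smul_mul_smul_comm, Matrix.nonsing_inv_mul _ ((Matrix.isUnit_iff_isUnit_det _).1 hA)]
    norm_num
  have hinv : HasDerivAt (fun τ => (matDeriv S τ)⁻¹)
      (-((matDeriv S t)⁻¹ * matDeriv (matDeriv S) t * (matDeriv S t)⁻¹)) t := by
    obtain ⟨u, hu⟩ := hreg t
    have hf := hasFDerivAt_ringInverse (𝕜 := ℝ) u
    rw [hu] at hf
    have := hf.comp_hasDerivAt t (h.matDeriv.hasDerivAt t)
    have hui : (↑u⁻¹ : Matrix (Fin n) (Fin n) ℝ) = (matDeriv S t)⁻¹ := by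
      rw [← hu, Matrix.coe_units_inv]
    simp [Function.comp_def, ← Matrix.nonsing_inv_eq_ringInverse, hui] at this
    exact this
  have hprod : HasDerivAt
      (fun τ => (1 / 2 : ℝ) • ((matDeriv S τ)⁻¹ * matDeriv (matDeriv S) τ)) _ t := (hinv.mul (h.matDeriv.matDeriv.hasDerivAt t)).const_smul (1 / 2 : ℝ)
  have hfun : (fun τ => ((2 : ℝ) • matDeriv S τ)⁻¹ * matDeriv (matDeriv S) τ)
      = fun τ => (1 / 2 : ℝ) • ((matDeriv S τ)⁻¹ * matDeriv (matDeriv S) τ) := by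
    funext τ
    rw [h2 _ (hreg τ), smul_mul_assoc]
  unfold curvatureMat
  rw [hfun, HasDerivAt.matDeriv_eq hprod, h2 _ (hreg t)]
  simp only [pow_two, smul_mul_assoc, mul_smul_comm, smul_smul, neg_mul, mul_assoc]
  module

/-- Taylor expansions of `S` and of its derivative, with the third derivative as last term. -/
lemma EntrySmooth.taylor {S : ℝ → Matrix (Fin n) (Fin n) ℝ} (h : EntrySmooth S) (t : ℝ) :
    ((fun τ => _root_.matDeriv S τ - (_root_.matDeriv S t
        + (τ - t) • _root_.matDeriv (_root_.matDeriv S) t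
        + ((τ - t) ^ 2 / 2) • _root_.matDeriv (_root_.matDeriv (_root_.matDeriv S)) t))
      =O[𝓝 t] fun τ => (τ - t) ^ 3) ∧
    ((fun τ => S τ - S t - ((τ - t) • _root_.matDeriv S t
        + ((τ - t) ^ 2 / 2) • _root_.matDeriv (_root_.matDeriv S) t
        + ((τ - t) ^ 3 / 6) • _root_.matDeriv (_root_.matDeriv (_root_.matDeriv S)) t))
      =O[𝓝 t] fun τ => (τ - t) ^ 4) := by
  have d0 := h.hasDerivAt
  have d1 := h.matDeriv.hasDerivAt
  have d2 := h.matDeriv.matDeriv.hasDerivAt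
  have d3 := h.matDeriv.matDeriv.matDeriv.hasDerivAt
  set S1 := _root_.matDeriv S
  set S2 := _root_.matDeriv S1
  set S3 := _root_.matDeriv S2
  have hx : ∀ x : ℝ, HasDerivAt (fun τ => τ - t) 1 x := fun x => (hasDerivAt_id x).sub_const t
  have hx2 : ∀ x : ℝ, HasDerivAt (fun τ => (τ - t) ^ 2 / 2) (x - t) x := fun x =>
    (((hx x).pow 2).div_const 2).congr_deriv (by simp)
  have hx3 : ∀ x : ℝ, HasDerivAt (fun τ => (τ - t) ^ 3 / 6) ((x - t) ^ 2 / 2) x := fun x =>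
    (((hx x).pow 3).div_const 6).congr_deriv (by simp; ring)
  have e3 : (fun τ => S3 τ - S3 t) =O[𝓝 t] fun τ => (τ - t) ^ 1 := by
    simpa using (d3 t).isBigO_sub
  have e2 : (fun τ => S2 τ - S2 t - (τ - t) • S3 t) =O[𝓝 t] fun τ => (τ - t) ^ 2 := by
    refine isBigO_pow_succ_of_deriv 1 (fun x => ?_) (by simp) e3
    exact (((d2 x).sub_const (S2 t)).sub ((hx x).smul_const (S3 t))).congr_deriv (by simp)
  have e1 : (fun τ => S1 τ - (S1 t + (τ - t) • S2 t + ((τ - t) ^ 2 / 2) • S3 t))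
      =O[𝓝 t] fun τ => (τ - t) ^ 3 := by
    refine isBigO_pow_succ_of_deriv 2 (fun x => ?_) (by simp) e2
    exact ((d1 x).sub ((((hx x).smul_const (S2 t)).const_add (S1 t)).add
      ((hx2 x).smul_const (S3 t)))).congr_deriv (by module)
  refine ⟨e1, isBigO_pow_succ_of_deriv 3 (fun x => ?_) (by simp) e1⟩
  exact (((d0 x).sub_const (S t)).sub ((((hx x).smul_const (S1 t)).add
    ((hx2 x).smul_const (S2 t))).add ((hx3 x).smul_const (S3 t)))).congr_deriv (by module)

end Curves

/-! ### Multiplying the expansions -/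

/-- The algebraic heart: if `P = 1 + hX + h²Y + O(h³)` and `Q = 1 + 2hX + 3h²Y + O(h³)`, then
`P (1 + h²(Y - X²)) P` agrees with `Q` up to `O(h³)`. -/
lemma isBigO_sub_sandwich {R : Type*} [NormedRing R] [NormedAlgebra ℝ R] {l : Filter ℝ}
    {h : ℝ → ℝ} (hl : Tendsto h l (𝓝 0)) {P Q : ℝ → R} {X Y : R}
    (hP : (fun τ => P τ - (1 + h τ • X + h τ ^ 2 • Y)) =O[l] fun τ => h τ ^ 3)
    (hQ : (fun τ => Q τ - (1 + (2 * h τ) • X + (3 * h τ ^ 2) • Y)) =O[l] fun τ => h τ ^ 3)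
    (hP1 : P =O[l] fun _ => (1 : ℝ)) :
    (fun τ => Q τ - P τ * (1 + h τ ^ 2 • (Y - X * X)) * P τ) =O[l] fun τ => h τ ^ 3 := by
  set Z := Y - X * X with hZ
  have bdd : ∀ F : ℝ → R, Continuous F → (fun τ => F (h τ)) =O[l] fun _ => (1 : ℝ) :=
    fun F hF => ((hF.tendsto 0).comp hl).isBigO_one ℝ
  have hF1 := bdd (fun x => 1 + x ^ 2 • Z) (by fun_prop)
  have hF2 := bdd (fun x => (1 + x • X + x ^ 2 • Y) * (1 + x ^ 2 • Z)) (by fun_prop)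
  -- the terms of order at least three in the product of the truncated polynomials
  have hF3 := bdd (fun x => -(X * Y + Y * X + x • (Y * Y) + (X * Z + Z * X)
    + x • (Y * Z + Z * Y + X * Z * X) + x ^ 2 • (X * Z * Y + Y * Z * X)
    + x ^ 3 • (Y * Z * Y))) (by fun_prop)
  have t1 := (hP.mul hF1).mul hP1
  have t2 := hF2.mul hP
  have t3 := (isBigO_refl (fun τ => h τ ^ 3) l).smul hF3
  simp only [mul_one, one_mul, smul_eq_mul] at t1 t2 t3
  refine (((hQ.sub t1).sub t2).add t3).congr_left fun τ => ?_
  generalize h τ = x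
  have poly : (1 + (2 * x) • X + (3 * x ^ 2) • Y)
      - (1 + x • X + x ^ 2 • Y) * (1 + x ^ 2 • Z) * (1 + x • X + x ^ 2 • Y)
      = x ^ 3 • (-(X * Y + Y * X + x • (Y * Y) + (X * Z + Z * X)
    + x • (Y * Z + Z * Y + X * Z * X) + x ^ 2 • (X * Z * Y + Y * Z * X)
    + x ^ 3 • (Y * Z * Y))) := by
    have hY : Y = Z + X * X := by rw [hZ]; abel
    clear_value Z
    subst hY
    simp only [mul_add, add_mul, smul_mul_assoc, mul_smul_comm, smul_smul, mul_one, one_mul,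
      mul_assoc, smul_add]
    module
  rw [← poly]
  generalize 1 + x • X + x ^ 2 • Y = p
  generalize 1 + x ^ 2 • Z = z
  noncomm_ring

end Auxiliary

/-- **Asymptotic expansion of the infinitesimal cross-ratio.**
For a smooth regular curve `S` of symmetric matrices, near each `t` the matrix
`S(τ) − S(t)` is invertible for `τ ≠ t` and
`(S(τ)−S(t))⁻¹ Ṡ(τ) (S(τ)−S(t))⁻¹ Ṡ(t) = (τ−t)⁻² I + ⅓ R_S(t) + O(τ−t)`. -/
theorem cross_ratio_expansion
    (n : ℕ) (S : ℝ → Matrix (Fin n) (Fin n) ℝ)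
    (hsymm : ∀ t, (S t).IsSymm)
    (hsmooth : ∀ i j, ContDiff ℝ (⊤ : ℕ∞) fun t => S t i j)
    (hreg : ∀ t, IsUnit (matDeriv S t))
    (t : ℝ) :
    ∃ ε > (0 : ℝ),
      (∀ τ : ℝ, τ ≠ t → |τ - t| < ε → IsUnit (S τ - S t)) ∧
      ∃ C : ℝ, ∀ τ : ℝ, τ ≠ t → |τ - t| < ε → ∀ i j,
        |((S τ - S t)⁻¹ * matDeriv S τ * (S τ - S t)⁻¹ * matDeriv S t
            - ((τ - t) ^ 2)⁻¹ • (1 : Matrix (Fin n) (Fin n) ℝ)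
            - (3 : ℝ)⁻¹ • curvatureMat S t) i j|
          ≤ C * |τ - t| := by
  open scoped Matrix.Norms.Operator Topology in
  open Filter Asymptotics in
  have hS : EntrySmooth S := hsmooth
  set A := matDeriv S t with hA
  set X := (1 / 2 : ℝ) • (A⁻¹ * matDeriv (matDeriv S) t) with hX
  set Y := (1 / 6 : ℝ) • (A⁻¹ * matDeriv (matDeriv (matDeriv S)) t) with hY
  have hAdet : IsUnit A.det := (Matrix.isUnit_iff_isUnit_det _).1 (hreg t)
  have hAA : A⁻¹ * A = 1 := Matrix.nonsing_inv_mul _ hAdet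
  have hAA' : A * A⁻¹ = 1 := Matrix.mul_nonsing_inv _ hAdet
  have hR : (3 : ℝ)⁻¹ • curvatureMat S t = Y - X * X := by
    rw [curvatureMat_eq hS hreg t, hX, hY, pow_two, smul_mul_smul_comm]
    module
  set P : ℝ → Matrix (Fin n) (Fin n) ℝ := fun τ => (τ - t)⁻¹ • (A⁻¹ * (S τ - S t)) with hPdef
  set Q : ℝ → Matrix (Fin n) (Fin n) ℝ := fun τ => A⁻¹ * matDeriv S τ with hQdef
  have hl : Tendsto (fun τ => τ - t) (𝓝[≠] t) (𝓝 0) := by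
    have : Tendsto (fun τ => τ - t) (𝓝 t) (𝓝 (t - t)) := by
      exact (continuous_id.sub continuous_const).tendsto t
    rw [sub_self] at this
    exact this.mono_left nhdsWithin_le_nhds
  have hne : ∀ᶠ τ in 𝓝[≠] t, τ - t ≠ 0 := by
    filter_upwards [self_mem_nhdsWithin] with τ hτ using sub_ne_zero.2 hτ
  obtain ⟨T1, T0⟩ := hS.taylor t
  have hP : (fun τ => P τ - (1 + (τ - t) • X + (τ - t) ^ 2 • Y))
      =O[𝓝[≠] t] fun τ => (τ - t) ^ 3 := by
    have hb := (isBigO_refl (fun τ => (τ - t)⁻¹) (𝓝[≠] t)).smul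
      ((isBigO_const_one ℝ A⁻¹ (𝓝[≠] t)).mul (T0.mono nhdsWithin_le_nhds))
    refine hb.congr' ?_ ?_
    · filter_upwards [hne] with τ hτ
      simp only [hPdef, mul_sub, mul_add, mul_smul_comm, ← hA, hAA, smul_sub, smul_add, smul_smul,
        hX, hY]
      match_scalars <;> field_simp
    · filter_upwards [hne] with τ hτ
      simp
      field_simp
  have hQ : (fun τ => Q τ - (1 + (2 * (τ - t)) • X + (3 * (τ - t) ^ 2) • Y))
      =O[𝓝[≠] t] fun τ => (τ - t) ^ 3 := by
    have hb := (isBigO_const_one ℝ A⁻¹ (𝓝[≠] t)).mul (T1.mono nhdsWithin_le_nhds)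
    refine hb.congr ?_ ?_
    · intro τ
      simp only [hQdef, mul_sub, mul_add, mul_smul_comm, ← hA, hAA, hX, hY]
      module
    · simp
  have hPlim : Tendsto P (𝓝[≠] t) (𝓝 1) := by
    have h3 : Tendsto (fun τ => (τ - t) ^ 3) (𝓝[≠] t) (𝓝 0) := by simpa using hl.pow 3
    have h1 := hP.trans_tendsto h3
    have h2 := ((tendsto_const_nhds (x := (1 : Matrix (Fin n) (Fin n) ℝ))).add
      (hl.smul_const X)).add ((hl.pow 2).smul_const Y)
    have h4 := h1.add h2
    simp only [sub_add_cancel, ne_eq, OfNat.ofNat_ne_zero, not_false_eq_true, zero_pow, zero_smul,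
      add_zero, zero_add] at h4
    exact h4
  have hPunit : ∀ᶠ τ in 𝓝[≠] t, IsUnit (P τ) :=
    hPlim.eventually (Units.isOpen.mem_nhds isUnit_one)
  have hPinv : (fun τ => (P τ)⁻¹) =O[𝓝[≠] t] fun _ => (1 : ℝ) := by
    have hc := NormedRing.inverse_continuousAt (1 : (Matrix (Fin n) (Fin n) ℝ)ˣ)
    have := (hc.tendsto.comp hPlim).isBigO_one ℝ
    simpa [Function.comp_def, ← Matrix.nonsing_inv_eq_ringInverse] using this
  have hmain := isBigO_sub_sandwich hl hP hQ (hPlim.isBigO_one ℝ)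
  have hfac : ∀ τ, τ - t ≠ 0 → S τ - S t = (τ - t) • (A * P τ) := by
    intro τ hτ
    rw [hPdef, mul_smul_comm, smul_smul, mul_inv_cancel₀ hτ, one_smul, ← mul_assoc, hAA', one_mul]
  -- conjugating the order-three estimate by the bounded `P⁻¹` and dividing by `(τ - t)²`
  have hfin : (fun τ => (S τ - S t)⁻¹ * matDeriv S τ * (S τ - S t)⁻¹ * A
      - ((τ - t) ^ 2)⁻¹ • (1 : Matrix (Fin n) (Fin n) ℝ) - (Y - X * X))
      =O[𝓝[≠] t] fun τ => τ - t := by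
    have hb := (isBigO_refl (fun τ => ((τ - t) ^ 2)⁻¹) (𝓝[≠] t)).smul
      ((hPinv.mul hmain).mul hPinv)
    refine hb.congr' ?_ ?_
    · filter_upwards [hne, hPunit] with τ hτ hu
      have hPdet : IsUnit (P τ).det := (Matrix.isUnit_iff_isUnit_det _).1 hu
      have p1 : (P τ)⁻¹ * P τ = 1 := Matrix.nonsing_inv_mul _ hPdet
      have p2 : P τ * (P τ)⁻¹ = 1 := Matrix.mul_nonsing_inv _ hPdet
      have hinv : (S τ - S t)⁻¹ = (τ - t)⁻¹ • ((P τ)⁻¹ * A⁻¹) := by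
        refine Matrix.inv_eq_left_inv ?_
        rw [hfac τ hτ, smul_mul_smul_comm, inv_mul_cancel₀ hτ, one_smul, mul_assoc,
          ← mul_assoc A⁻¹, hAA, one_mul, p1]
      have e1 : (P τ)⁻¹ * (Q τ - P τ * (1 + (τ - t) ^ 2 • (Y - X * X)) * P τ) * (P τ)⁻¹
          = (P τ)⁻¹ * Q τ * (P τ)⁻¹ - (1 + (τ - t) ^ 2 • (Y - X * X)) := by
        rw [mul_sub, sub_mul]
        congr 1
        rw [mul_assoc (P τ), ← mul_assoc (P τ)⁻¹, p1, one_mul, mul_assoc, p2, mul_one]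
      have e2 : (S τ - S t)⁻¹ * matDeriv S τ * (S τ - S t)⁻¹ * A
          = ((τ - t) ^ 2)⁻¹ • ((P τ)⁻¹ * Q τ * (P τ)⁻¹) := by
        rw [hinv]
        simp only [smul_mul_assoc, mul_smul_comm, smul_smul, mul_assoc, hAA, mul_one, hQdef]
        congr 1
        field_simp
      rw [e1, e2, smul_sub, smul_add, smul_smul, inv_mul_cancel₀ (pow_ne_zero 2 hτ), one_smul]
      abel
    · filter_upwards [hne] with τ hτ
      simp
      field_simp
  obtain ⟨C, hC⟩ := hfin.bound
  have hev := hC.and (hne.and hPunit)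
  rw [eventually_nhdsWithin_iff, Metric.eventually_nhds_iff] at hev
  obtain ⟨ε, hε, H⟩ := hev
  refine ⟨ε, hε, fun τ hτ hd => ?_, C, fun τ hτ hd i j => ?_⟩
  · obtain ⟨-, h0, hu⟩ := H (by rwa [Real.dist_eq]) hτ
    rw [hfac τ h0]
    exact ((hreg t).mul hu).smul (Units.mk0 _ h0)
  · obtain ⟨hb, -, -⟩ := H (by rwa [Real.dist_eq]) hτ
    rw [hR]
    exact (abs_entry_le_norm _ i j).trans hb
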